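/- arXiv:1406.1026 — 2 statements merged into one kernel-verified Lean document; each statement's English description precedes it below -/
import Mathlib

section
/- Let V be a non-separable real Banach space and let W ⊆ V be a separable linear subspace. Then there exists a convex cone C ⊂ V, dense in V, such that every element of C lies outside W; in particular, for any set U ⊆ V with span(U) separable, the set C' = C + span(U) is a dense convex cone in V with U ∩ C' = ∅ whenever U ⊆ span(U). -/
open Filter Topology Set Pointwise

/-- In a non-separable real Banach space `V`, for any separable linear subspace `W ⊆ V`
there is a dense convex cone `C ⊂ V` every element of which lies outside `W`; in
particular, for any set `U ⊆ V` whose span is `W` (so that `span U` is separable), the set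
`C' = C + span U` is a dense convex cone with `U ∩ C' = ∅` whenever `U ⊆ span U`. -/
theorem exists_dense_convex_cone_avoiding_separable_subspace
    {V : Type*} [NormedAddCommGroup V] [NormedSpace ℝ V] [CompleteSpace V]
    (hnsep : ¬ TopologicalSpace.SeparableSpace V)
    (W : Submodule ℝ V) (hWsep : TopologicalSpace.IsSeparable (W : Set V)) :
    ∃ C : Set V, Convex ℝ C ∧ (∀ x ∈ C, ∀ t : ℝ, 0 < t → t • x ∈ C) ∧
      Dense C ∧ (∀ x ∈ C, x ∉ W) ∧
      ∀ U : Set V, Submodule.span ℝ U = W → U ⊆ (W : Set V) →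
        Convex ℝ (C + (W : Set V)) ∧
        (∀ x ∈ C + (W : Set V), ∀ t : ℝ, 0 < t → t • x ∈ C + (W : Set V)) ∧
        Dense (C + (W : Set V)) ∧ U ∩ (C + (W : Set V)) = ∅ := by
  classical
  have hinf : ¬ Module.Finite ℝ (V ⧸ W) := by
    intro hfin
    apply hnsep
    obtain ⟨P, hP⟩ := Submodule.exists_isCompl W
    have e := Submodule.quotientEquivOfIsCompl W P hP
    have hPf : Module.Finite ℝ P := Module.Finite.equiv e
    obtain ⟨s, hs⟩ := (Module.Finite.iff_fg.mp hPf)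
    have h1 : TopologicalSpace.IsSeparable ((W : Set V) ∪ (s : Set V)) :=
      hWsep.union s.countable_toSet.isSeparable
    have h2 := h1.span (R := ℝ)
    rw [Submodule.span_union, hs, Submodule.span_eq, hP.sup_eq_top] at h2
    exact TopologicalSpace.isSeparable_univ_iff.mp (by simpa using h2)
  let b := Module.Basis.ofVectorSpace ℝ (V ⧸ W)
  have hι : Infinite (Module.Basis.ofVectorSpaceIndex ℝ (V ⧸ W)) := by
    by_contra h
    rw [not_infinite_iff_finite] at h
    exact hinf (Module.Finite.of_basis b)
  let e := Infinite.natEmbedding (Module.Basis.ofVectorSpaceIndex ℝ (V ⧸ W))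
  choose v hv using fun i => W.mkQ_surjective (b i)
  let g : V ⧸ W →ₗ[ℝ] ℝ := b.constr ℝ (fun i => ((Function.invFun e i : ℕ) : ℝ) * ‖v i‖)
  let f : V →ₗ[ℝ] ℝ := g ∘ₗ W.mkQ
  have hfW : ∀ w ∈ W, f w = 0 := by
    intro w hw
    have : W.mkQ w = 0 := by simpa using hw
    simp [f, LinearMap.comp_apply, this, -Submodule.mkQ_apply]
  have hfv : ∀ n : ℕ, f (v (e n)) = n * ‖v (e n)‖ := by
    intro n
    have : Function.invFun e (e n) = n := Function.leftInverse_invFun e.injective n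
    simp only [f, g, LinearMap.comp_apply, hv, Module.Basis.constr_basis, this]
  have hv0 : ∀ i, 0 < ‖v i‖ := by
    intro i
    rw [norm_pos_iff]
    intro h
    have := hv i
    rw [h, map_zero] at this
    exact b.ne_zero i this.symm
  have hnc : ¬ Continuous f := by
    intro hc
    let F : V →L[ℝ] ℝ := ⟨f, hc⟩
    obtain ⟨n, hn⟩ := exists_nat_gt ‖F‖
    have h1 := F.le_opNorm (v (e n))
    have h2 : F (v (e n)) = n * ‖v (e n)‖ := hfv n
    rw [h2, Real.norm_of_nonneg (by positivity)] at h1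
    exact absurd (le_of_mul_le_mul_right h1 (hv0 _)) (not_le.mpr hn)
  have hker : Dense (LinearMap.ker f : Set V) :=
    (LinearMap.isClosed_or_dense_ker f).resolve_left
      (fun h => hnc (LinearMap.continuous_iff_isClosed_ker f |>.mpr h))
  have hx0 : 0 < f (v (e 1)) := by
    rw [hfv]; simpa using hv0 (e 1)
  have hCd : Dense {x | 0 < f x} := by
    have h := (Homeomorph.addLeft (v (e 1))).surjective.denseRange.dense_image
      (Homeomorph.addLeft (v (e 1))).continuous hker
    refine h.mono ?_
    rintro _ ⟨k, hk, rfl⟩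
    have hk' : f k = 0 := hk
    simp only [Homeomorph.coe_addLeft, mem_setOf_eq, map_add, hk', add_zero]
    exact hx0
  have hCW : {x | 0 < f x} + (W : Set V) = {x | 0 < f x} := by
    ext x
    constructor
    · rintro ⟨c, hc, w, hw, rfl⟩
      have hc' : 0 < f c := hc
      simpa [hfW w hw] using hc'
    · intro hx
      exact ⟨x, hx, 0, W.zero_mem, add_zero x⟩
  have hconv : Convex ℝ {x | 0 < f x} := convex_halfSpace_gt f.isLinear 0
  have hcone : ∀ x ∈ {x | 0 < f x}, ∀ t : ℝ, 0 < t → t • x ∈ {x | 0 < f x} := by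
    intro x hx t ht
    have hx' : 0 < f x := hx
    simp only [mem_setOf_eq, map_smul, smul_eq_mul]
    positivity
  have hdis : ∀ x ∈ {x | 0 < f x}, x ∉ W := fun x hx hw => by
    have hx' : 0 < f x := hx
    rw [hfW x hw] at hx'
    exact lt_irrefl _ hx'
  refine ⟨{x | 0 < f x}, hconv, hcone, hCd, hdis, ?_⟩
  intro U _ hU
  rw [hCW]
  refine ⟨hconv, hcone, hCd, ?_⟩
  ext x
  simp only [mem_inter_iff, mem_empty_iff_false, iff_false, not_and]
  exact fun hxU hx => hdis x hx (hU hxU)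
end

section
/- Let (X, ⟨·,·⟩) be a real Hilbert space and let T : X → X be a potential operator of class C¹ that is not monotone. Set Γ = {(x, y) ∈ X × X : ⟨T'(x)(y), y⟩ < 0} and μ̄ = inf_{(x,y)∈Γ} ⟨T'(x)(y), y⟩/‖y‖². Then Γ ≠ ∅ and, for every μ with μ̄ < μ < 0, the functional I_μ(x) := (1/2)‖x‖² − (1/μ) J_T(x) is not convex. -/
open Filter Topology Set

/-- From the proof of Theorem 3: if `T` is a non-monotone `C¹` potential operator on a real
Hilbert space `X`, then `Γ = {(x,y) : ⟨T'(x)y, y⟩ < 0}` is nonempty and, for every `μ` with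
`μ̄ < μ < 0` (where `μ̄ = inf_{(x,y) ∈ Γ} ⟨T'(x)y, y⟩ / ‖y‖²`), the functional
`I_μ(x) = ½‖x‖² - (1/μ) J_T(x)` is not convex. -/
theorem Imu_not_convex_of_nonmonotone
    {X : Type*} [NormedAddCommGroup X] [InnerProductSpace ℝ X] [CompleteSpace X]
    (T : X → X)
    (hTC1 : ContDiff ℝ 1 T)
    (JT : X → ℝ)
    (hJT : JT = fun x => ∫ s in (0:ℝ)..1, @inner ℝ X _ (T (s • x)) x)
    (hpot : ∀ x : X, HasFDerivAt JT (InnerProductSpace.toDual ℝ X (T x) : X →L[ℝ] ℝ) x)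
    (hnmono : ¬ ∀ x y : X, 0 ≤ @inner ℝ X _ (T x - T y) (x - y))
    (Γ : Set (X × X))
    (hΓ : Γ = {p : X × X | @inner ℝ X _ (fderiv ℝ T p.1 p.2) p.2 < 0})
    (μbar : EReal)
    (hμbar : μbar = ⨅ p : Γ, ((@inner ℝ X _ (fderiv ℝ T (p : X × X).1 (p : X × X).2)
      (p : X × X).2 / ‖(p : X × X).2‖ ^ 2 : ℝ) : EReal)) :
    Γ.Nonempty ∧ ∀ μ : ℝ, μbar < (μ : EReal) → μ < 0 →
      ¬ ConvexOn ℝ Set.univ (fun x : X => (1/2) * ‖x‖ ^ 2 - (1/μ) * JT x) := by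
  have hT : Differentiable ℝ T := hTC1.differentiable (by norm_num)
  have hline : ∀ (x y : X) (t : ℝ), HasDerivAt (fun t : ℝ => x + t • y) y t := by
    intro x y t
    simpa using ((hasDerivAt_id t).smul_const y).const_add x
  have hg : ∀ (x y : X) (t : ℝ), HasDerivAt (fun t : ℝ => @inner ℝ X _ (T (x + t • y)) y)
      (@inner ℝ X _ (fderiv ℝ T (x + t • y) y) y) t := by
    intro x y t
    have h1 := (hT (x + t • y)).hasFDerivAt.comp_hasDerivAt t (hline x y t)
    have h2 := h1.inner ℝ (hasDerivAt_const t y)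
    simpa using h2
  constructor
  · by_contra hne
    apply hnmono
    intro x y
    have hpos : ∀ a b : X, 0 ≤ @inner ℝ X _ (fderiv ℝ T a b) b := by
      intro a b
      by_contra h
      exact hne ⟨(a, b), by rw [hΓ]; exact not_le.mp h⟩
    have hm : Monotone (fun t : ℝ => @inner ℝ X _ (T (y + t • (x - y))) (x - y)) := by
      apply monotone_of_deriv_nonneg (fun t => (hg y (x - y) t).differentiableAt)
      intro t
      rw [(hg y (x - y) t).deriv]
      exact hpos _ _
    have := hm (zero_le_one)
    simp at this
    rw [inner_sub_left]
    linarith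
  · intro μ hμ hμ0 hc
    rw [hμbar, iInf_lt_iff] at hμ
    obtain ⟨⟨⟨x, y⟩, hp⟩, hlt⟩ := hμ
    rw [hΓ] at hp
    simp only [Set.mem_ofPred_eq] at hp
    have hlt' := EReal.coe_lt_coe_iff.mp hlt
    simp only at hlt'
    have hy : y ≠ 0 := by
      rintro rfl
      simp at hp
    have hyn : 0 < ‖y‖ ^ 2 := by positivity
    rw [div_lt_iff₀ hyn] at hlt'
    have hf : ∀ t : ℝ, HasDerivAt (fun t : ℝ => (1/2) * ‖x + t • y‖ ^ 2 - (1/μ) * JT (x + t • y))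
        (@inner ℝ X _ (x + t • y) y - (1/μ) * @inner ℝ X _ (T (x + t • y)) y) t := by
      intro t
      have h1 := ((hline x y t).norm_sq).const_mul (1/2 : ℝ)
      have h2 := ((hpot (x + t • y)).comp_hasDerivAt t (hline x y t)).const_mul (1/μ)
      have h3 := h1.sub h2
      refine h3.congr_deriv ?_
      simp
    have hcf : ConvexOn ℝ Set.univ
        (fun t : ℝ => (1/2) * ‖x + t • y‖ ^ 2 - (1/μ) * JT (x + t • y)) := by
      have := hc.comp_affineMap (AffineMap.lineMap x (x + y) : ℝ →ᵃ[ℝ] X)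
      rw [Set.preimage_univ] at this
      have he : (fun t : ℝ => (1/2) * ‖x + t • y‖ ^ 2 - (1/μ) * JT (x + t • y)) =
          (fun x : X => (1/2) * ‖x‖ ^ 2 - (1/μ) * JT x) ∘
            (AffineMap.lineMap x (x + y) : ℝ →ᵃ[ℝ] X) := by
        funext t
        have : (AffineMap.lineMap x (x + y) : ℝ →ᵃ[ℝ] X) t = x + t • y := by
          simp [AffineMap.lineMap_apply, add_comm]
        simp only [Function.comp_apply, this]
      rw [he]
      exact this
    have hmon := hcf.monotoneOn_deriv (fun t _ => (hf t).differentiableAt)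
    have hm : Monotone (fun t : ℝ => @inner ℝ X _ (x + t • y) y
        - (1/μ) * @inner ℝ X _ (T (x + t • y)) y) := by
      intro a b hab
      have := hmon (Set.mem_univ a) (Set.mem_univ b) hab
      rwa [(hf a).deriv, (hf b).deriv] at this
    have hd : HasDerivAt (fun t : ℝ => @inner ℝ X _ (x + t • y) y
        - (1/μ) * @inner ℝ X _ (T (x + t • y)) y)
        (‖y‖ ^ 2 - (1/μ) * @inner ℝ X _ (fderiv ℝ T x y) y) 0 := by
      have h1 := (hline x y 0).inner ℝ (hasDerivAt_const (0:ℝ) y)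
      have h2 := (hg x y 0).const_mul (1/μ)
      refine (h1.sub h2).congr_deriv ?_
      simp
    have hnn := hm.deriv_nonneg (x := 0)
    rw [hd.deriv] at hnn
    have : ‖y‖ ^ 2 < (1/μ) * @inner ℝ X _ (fderiv ℝ T x y) y := by
      rw [one_div, inv_mul_eq_div, lt_div_iff_of_neg hμ0]
      linarith
    linarith
end
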